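/- Let A = (A₁, A₂) be a commuting 2-contraction on H with D_{A*} injective, let λ = (λ₁,λ₂) ∈ 𝔻², λ ≠ 0, and let (z₁,z₂) ∈ 𝔻². If there exists y ≠ 0 in H with (θ_A(z₁,z₂))*(D_{A*}y) = 0, then Φ_λ(z₁,z₂) ∈ σ_T^{(3)}(B₁(λ),B₂(λ)). -/

import Mathlib

open ContinuousLinearMap Filter

/-!
From `A D_A = D_{A*} A` one gets `θ_A(z) D_A = D_{A*} (1 - Z A*)⁻¹ (Z - A)`. Hence a vector `u` in
the kernel of `θ_A(z)*` gives the vector `v = ((1 - Z A*)⁻¹)* D_{A*} u` with `A* v = Z* v`, that is,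
a joint eigenvector of `(A₁*, A₂*)` for the eigenvalues `conj zᵢ`.

On such a `v` the operators `Φ_λ(A)*` and `Φ_λ(Z)*` agree, because `Λ A* v = Λ Z* v` is a multiple
of `v` and so `(1 - Λ A*)⁻¹ v` is the same multiple of `v` as `(1 - Λ Z*)⁻¹ v`. Evaluating the
defect operator of the scalar row as `D_Λ = 1 - ((1 - s) / ‖λ‖²) Λ*Λ` identifies `Φ_λ(Z)` with the
scalar row of entries `Φ_λ(z)`. So `v` is orthogonal to the range of `Φ_λ(A) - Φ_λ(Z)`.
-/

section HilbertSpaces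

variable {E F : Type*} [NormedAddCommGroup E] [InnerProductSpace ℂ E] [CompleteSpace E]
  [NormedAddCommGroup F] [InnerProductSpace ℂ F] [CompleteSpace F]

lemma not_surjective_of_adjoint_apply_eq_zero {X : E →L[ℂ] F} {v : F} (hv : v ≠ 0)
    (h : adjoint X v = 0) : ¬ Function.Surjective X := by
  intro hX
  obtain ⟨x, rfl⟩ := hX v
  rw [← inner_self_ne_zero (𝕜 := ℂ), ← adjoint_inner_left, h, inner_zero_left] at hv
  exact hv rfl

/-! ### Intertwining of positive square roots -/

lemma comp_eq_zero_of_comp_eq_neg_comp {Y : E →L[ℂ] F} {P : E →L[ℂ] E} {Q : F →L[ℂ] F}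
    (hP : 0 ≤ P) (hQ : 0 ≤ Q) (h : Q ∘L Y = -(Y ∘L P)) : Q ∘L Y = 0 := by
  have hYP : 0 ≤ Y ∘L P ∘L adjoint Y :=
    (nonneg_iff_isPositive _).2 (((nonneg_iff_isPositive P).1 hP).conj_adjoint Y)
  have hYY : 0 ≤ Y ∘L adjoint Y := (nonneg_iff_isPositive _).2 (isPositive_self_comp_adjoint Y)
  have hQYY : Q * (Y ∘L adjoint Y) = -(Y ∘L P ∘L adjoint Y) := by
    rw [mul_def, ← comp_assoc, h, neg_comp, comp_assoc]
  have hcomm : Commute Q (Y ∘L adjoint Y) := by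
    refine (IsSelfAdjoint.of_nonneg hQ).commute_iff (IsSelfAdjoint.of_nonneg hYY) |>.2 ?_
    rw [hQYY]
    exact (IsSelfAdjoint.of_nonneg hYP).neg
  have hzero : Q * (Y ∘L adjoint Y) = 0 :=
    le_antisymm (hQYY ▸ neg_nonpos.2 hYP) (hcomm.mul_nonneg hQ hYY)
  rw [← (adjoint (𝕜 := ℂ)).map_eq_zero_iff, ← adjoint_comp_self_eq_zero_iff, adjoint_adjoint,
    adjoint_comp, ← comp_assoc, comp_assoc Q, ← mul_def Q, hzero, zero_comp]

/-- The difference `Y = X P - Q X` satisfies `Q Y = -Y P`, so both sides vanish, and then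
`Y Y* Y = (Y P X* - Y X* Q) Y = 0`. -/
lemma comp_eq_comp_of_comp_sq_eq_sq_comp {X : E →L[ℂ] F} {P : E →L[ℂ] E} {Q : F →L[ℂ] F}
    (hP : 0 ≤ P) (hQ : 0 ≤ Q) (h : X ∘L (P * P) = (Q * Q) ∘L X) : X ∘L P = Q ∘L X := by
  obtain ⟨Y, hY⟩ : ∃ Y, Y = X ∘L P - Q ∘L X := ⟨_, rfl⟩
  have hneg : Q ∘L Y = -(Y ∘L P) := by
    simp only [hY, comp_sub, sub_comp, neg_sub, comp_assoc, ← mul_def, h]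
    rfl
  have hQY : Q ∘L Y = 0 := comp_eq_zero_of_comp_eq_neg_comp hP hQ hneg
  have hYP : Y ∘L P = 0 := by rwa [hneg, neg_eq_zero] at hQY
  have hY_adj : adjoint Y = P ∘L adjoint X - adjoint X ∘L Q := by
    rw [hY, map_sub, adjoint_comp, adjoint_comp, (IsSelfAdjoint.of_nonneg hP).adjoint_eq,
      (IsSelfAdjoint.of_nonneg hQ).adjoint_eq]
  have hYYY : Y ∘L adjoint Y ∘L Y = 0 := by
    rw [hY_adj, sub_comp, comp_sub, comp_assoc, ← comp_assoc Y P, hYP, comp_assoc (adjoint X), hQY]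
    simp
  have hY0 : Y = 0 := by
    rw [← adjoint_comp_self_eq_zero_iff, ← adjoint_comp_self_eq_zero_iff, adjoint_comp,
      adjoint_adjoint, comp_assoc, hYYY, comp_zero]
  exact sub_eq_zero.1 (hY.symm.trans hY0)

/-! ### Defect operators -/

/-- `D` is the defect operator `D_A = (1 - A*A)^{1/2}` of `A`. For a row operator `A`, the operator
`D_{A*}` is the defect operator of `adjoint A`. -/
structure IsDefectOperator (D : E →L[ℂ] E) (A : E →L[ℂ] F) : Prop where
  nonneg : 0 ≤ D
  mul_self : D * D = 1 - adjoint A ∘L A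

namespace IsDefectOperator

lemma adjoint_eq {D : E →L[ℂ] E} {A : E →L[ℂ] F} (hD : IsDefectOperator D A) : adjoint D = D :=
  (IsSelfAdjoint.of_nonneg hD.nonneg).adjoint_eq

lemma comp_eq_comp {A : E →L[ℂ] F} {D : E →L[ℂ] E} {D' : F →L[ℂ] F}
    (hD : IsDefectOperator D A) (hD' : IsDefectOperator D' (adjoint A)) : A ∘L D = D' ∘L A := by
  refine comp_eq_comp_of_comp_sq_eq_sq_comp hD.nonneg hD'.nonneg ?_
  rw [hD.mul_self, hD'.mul_self, adjoint_adjoint, comp_sub, sub_comp, comp_assoc]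
  rfl

end IsDefectOperator

lemma one_sub_smul_mul_self {R : Type*} [Ring R] [Algebra ℝ R] {K : R} {m : ℝ} (hm : m ≠ 0)
    (hK : K * K = m • K) (t : ℝ) :
    (1 - ((1 - t) / m) • K) * (1 - ((1 - t) / m) • K) = 1 - ((1 - t ^ 2) / m) • K := by
  simp only [sub_mul, mul_sub, one_mul, mul_one, smul_mul_smul_comm, hK, smul_smul]
  match_scalars <;> field_simp
  ring

/-- The right-hand side is nonnegative because it is the square of the same expression with `√s` in
place of `s`. -/
lemma IsDefectOperator.eq_one_sub_smul {L : E →L[ℂ] F} {D : E →L[ℂ] E}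
    (hD : IsDefectOperator D L) {m s : ℝ} (hm : m ≠ 0) (hs : 0 ≤ s) (hsm : s ^ 2 = 1 - m)
    (hL : L ∘L adjoint L = m • (1 : F →L[ℂ] F)) : D = 1 - ((1 - s) / m) • (adjoint L ∘L L) := by
  have hK : (adjoint L ∘L L) * (adjoint L ∘L L) = m • (adjoint L ∘L L) := by
    rw [mul_def, comp_assoc, ← comp_assoc L, hL]
    ext x
    simp
  have hnonneg : 0 ≤ 1 - ((1 - s) / m) • (adjoint L ∘L L) := by
    have hsqrt := one_sub_smul_mul_self hm hK √s
    rw [Real.sq_sqrt hs] at hsqrt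
    have hsa : IsSelfAdjoint (1 - ((1 - √s) / m) • (adjoint L ∘L L)) :=
      (IsSelfAdjoint.one _).sub
        ((IsSelfAdjoint.all _).smul (isPositive_adjoint_comp_self L).isSelfAdjoint)
    exact hsqrt ▸ hsa.mul_self_nonneg
  have hsq := one_sub_smul_mul_self hm hK s
  rw [hsm, sub_sub_cancel, div_self hm, one_smul, ← hD.mul_self] at hsq
  rw [← CFC.sqrt_unique rfl hD.nonneg, ← CFC.sqrt_unique hsq hnonneg]

lemma IsDefectOperator.comp_eq_sub_smul {L Z : E →L[ℂ] F} {D : E →L[ℂ] E}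
    (hD : IsDefectOperator D L) {m s : ℝ} (hm : m ≠ 0) (hs : 0 ≤ s) (hsm : s ^ 2 = 1 - m)
    (hL : L ∘L adjoint L = m • (1 : F →L[ℂ] F)) {c : ℂ}
    (hZL : Z ∘L adjoint L = c • (1 : F →L[ℂ] F)) :
    Z ∘L D = Z - ((1 - (s : ℂ)) * (c / (m : ℂ))) • L := by
  rw [hD.eq_one_sub_smul hm hs hsm hL, comp_sub, comp_smul, ← comp_assoc, hZL]
  ext x
  simp only [sub_apply, smul_apply, comp_apply, ← Complex.coe_smul, smul_smul]
  push_cast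
  rw [div_mul_eq_mul_div, mul_div_assoc]
  rfl

/-! ### Characteristic functions and Möbius transforms -/

/-- The value `θ_A(z) = -A + D_{A*} (1 - Z A*)⁻¹ Z D_A` of the characteristic function of `A` at the
point `z` with row operator `Z`; `R` stands for the inverse of `1 - Z A*`. -/
noncomputable def characteristicOperator (A Z : E →L[ℂ] F) (DA : E →L[ℂ] E)
    (Dstar R : F →L[ℂ] F) : E →L[ℂ] F :=
  -A + Dstar ∘L R ∘L Z ∘L DA

/-- The Möbius transform `Φ_Λ(A) = Λ - D_{Λ*} (1 - A Λ*)⁻¹ A D_Λ` for a scalar defect operator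
`D_{Λ*} = s`; `T` stands for the inverse of `1 - A Λ*`. -/
noncomputable def moebiusTransform (L A : E →L[ℂ] F) (T : F →L[ℂ] F) (D : E →L[ℂ] E) (s : ℂ) :
    E →L[ℂ] F :=
  L - s • (T ∘L A ∘L D)

lemma characteristicOperator_comp_defect {A Z : E →L[ℂ] F} {DA : E →L[ℂ] E} {Dstar R : F →L[ℂ] F}
    (hDA : IsDefectOperator DA A) (hDstar : IsDefectOperator Dstar (adjoint A))
    (hR : R * (1 - Z ∘L adjoint A) = 1) :
    characteristicOperator A Z DA Dstar R ∘L DA = Dstar ∘L R ∘L (Z - A) := by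
  have hRA : A = R ∘L A - R ∘L Z ∘L adjoint A ∘L A := by
    simpa [mul_def, comp_sub, sub_comp, comp_assoc, one_def] using congr($hR.symm ∘L A)
  calc characteristicOperator A Z DA Dstar R ∘L DA
      = -(A ∘L DA) + Dstar ∘L R ∘L Z ∘L (DA * DA) := by
        simp only [characteristicOperator, add_comp, neg_comp, comp_assoc, mul_def]
    _ = Dstar ∘L (-A + R ∘L Z - R ∘L Z ∘L adjoint A ∘L A) := by
        rw [hDA.comp_eq_comp hDstar, hDA.mul_self]
        simp only [comp_sub, comp_add, comp_neg, one_def, comp_id]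
        abel
    _ = Dstar ∘L R ∘L (Z - A) := by
        nth_rw 1 [hRA]
        simp only [comp_sub, comp_add, comp_neg]
        abel

lemma exists_adjoint_apply_eq_of_adjoint_characteristicOperator_apply_eq_zero
    {A Z : E →L[ℂ] F} {DA : E →L[ℂ] E} {Dstar R : F →L[ℂ] F} (hDA : IsDefectOperator DA A)
    (hDstar : IsDefectOperator Dstar (adjoint A)) (hR : R * (1 - Z ∘L adjoint A) = 1) {u : F}
    (hu : Dstar u ≠ 0) (hθ : adjoint (characteristicOperator A Z DA Dstar R) u = 0) :
    ∃ v ≠ 0, adjoint A v = adjoint Z v := by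
  refine ⟨adjoint R (Dstar u), fun hv => hu ?_, ?_⟩
  · have hR_adj : adjoint (1 - Z ∘L adjoint A) ∘L adjoint R = 1 := by
      rw [← adjoint_comp, ← mul_def, hR, adjoint_one]
    simpa [hv] using congr($hR_adj.symm (Dstar u))
  · have h := congr(adjoint ($(characteristicOperator_comp_defect hDA hDstar hR)) u)
    rw [adjoint_comp, comp_apply, hθ, map_zero] at h
    simp only [adjoint_comp, hDstar.adjoint_eq, map_sub, comp_apply, sub_apply] at h
    exact (sub_eq_zero.1 h.symm).symm

lemma adjoint_inverse_comp_apply {A L Z : E →L[ℂ] F} {T : F →L[ℂ] F} {c : ℂ} {v : F}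
    (hv : v ≠ 0) (hAZ : adjoint A v = adjoint Z v) (hT : (1 - A ∘L adjoint L) * T = 1)
    (hZL : Z ∘L adjoint L = c • (1 : F →L[ℂ] F)) :
    adjoint (T ∘L A) v = adjoint ((1 - c)⁻¹ • Z) v := by
  have hLZ : L (adjoint Z v) = starRingEnd ℂ c • v := by
    simpa [map_smulₛₗ, adjoint_one] using congr(adjoint $hZL v)
  have hTv : (1 - starRingEnd ℂ c) • adjoint T v = v := by
    have hT_adj := congr(adjoint $hT v)
    rw [mul_def, adjoint_comp, adjoint_one, map_sub, adjoint_one, adjoint_comp,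
      adjoint_adjoint] at hT_adj
    simpa [hAZ, hLZ, sub_smul] using hT_adj
  have hc : 1 - starRingEnd ℂ c ≠ 0 := fun hc => hv (by simpa [hc] using hTv.symm)
  rw [adjoint_comp, comp_apply, eq_inv_smul_iff₀ hc |>.2 hTv, map_smul, hAZ]
  simp [map_smulₛₗ]

theorem not_surjective_moebiusTransform_sub {A L Z : E →L[ℂ] F} {DA : E →L[ℂ] E}
    {Dstar R T : F →L[ℂ] F} {c : ℂ} {u : F} (hDA : IsDefectOperator DA A)
    (hDstar : IsDefectOperator Dstar (adjoint A)) (hR : R * (1 - Z ∘L adjoint A) = 1)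
    (hT : (1 - A ∘L adjoint L) * T = 1) (hZL : Z ∘L adjoint L = c • (1 : F →L[ℂ] F))
    (hu : Dstar u ≠ 0) (hθ : adjoint (characteristicOperator A Z DA Dstar R) u = 0)
    (D : E →L[ℂ] E) (s : ℂ) :
    ¬ Function.Surjective
      (moebiusTransform L A T D s - moebiusTransform L Z ((1 - c)⁻¹ • 1) D s) := by
  obtain ⟨v, hv, hAZ⟩ :=
    exists_adjoint_apply_eq_of_adjoint_characteristicOperator_apply_eq_zero hDA hDstar hR hu hθ
  have hfactor : moebiusTransform L A T D s - moebiusTransform L Z ((1 - c)⁻¹ • 1) D s =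
      s • (((1 - c)⁻¹ • Z - T ∘L A) ∘L D) := by
    simp only [moebiusTransform, one_def, smul_comp, id_comp, sub_comp, smul_sub, comp_assoc]
    abel
  refine not_surjective_of_adjoint_apply_eq_zero hv ?_
  rw [hfactor, map_smulₛₗ, smul_apply, adjoint_comp, comp_apply, map_sub, sub_apply,
    adjoint_inverse_comp_apply hv hAZ hT hZL, sub_self, map_zero, smul_zero]

end HilbertSpaces

/-! ### Row operators -/

section RowOperators

variable {H : Type*} [NormedAddCommGroup H] [InnerProductSpace ℂ H]
  {E₁ : Type*} [NormedAddCommGroup E₁] [InnerProductSpace ℂ E₁]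
  {E₂ : Type*} [NormedAddCommGroup E₂] [InnerProductSpace ℂ E₂]

/-- The row operator `(x₁, x₂) ↦ X₁ x₁ + X₂ x₂` on the Hilbert space direct sum. -/
noncomputable def rowOperator (X₁ : E₁ →L[ℂ] H) (X₂ : E₂ →L[ℂ] H) :
    WithLp 2 (E₁ × E₂) →L[ℂ] H :=
  X₁ ∘L WithLp.fstL 2 ℂ E₁ E₂ + X₂ ∘L WithLp.sndL 2 ℂ E₁ E₂

lemma rowOperator_apply (X₁ : E₁ →L[ℂ] H) (X₂ : E₂ →L[ℂ] H) (x : WithLp 2 (E₁ × E₂)) :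
    rowOperator X₁ X₂ x = X₁ x.fst + X₂ x.snd :=
  rfl

lemma eq_rowOperator {X : WithLp 2 (E₁ × E₂) →L[ℂ] H} {X₁ : E₁ →L[ℂ] H} {X₂ : E₂ →L[ℂ] H}
    (h : ∀ x y, X ((WithLp.equiv 2 (E₁ × E₂)).symm (x, y)) = X₁ x + X₂ y) :
    X = rowOperator X₁ X₂ :=
  ContinuousLinearMap.ext fun x => h x.fst x.snd

lemma rowOperator_sub (X₁ Y₁ : E₁ →L[ℂ] H) (X₂ Y₂ : E₂ →L[ℂ] H) :
    rowOperator (X₁ - Y₁) (X₂ - Y₂) = rowOperator X₁ X₂ - rowOperator Y₁ Y₂ := by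
  simp only [rowOperator, sub_comp]
  abel

lemma surjective_rowOperator_of_surjective_sub {X₁ : E₁ →L[ℂ] H} {X₂ : E₂ →L[ℂ] H}
    (h : Function.Surjective fun p : E₁ × E₂ => X₁ p.1 - X₂ p.2) :
    Function.Surjective (rowOperator X₁ X₂) := by
  intro y
  obtain ⟨p, rfl⟩ := h y
  exact ⟨WithLp.toLp 2 (p.1, -p.2), by simp [rowOperator_apply, sub_eq_add_neg]⟩

/-- The row operator `(x₁, x₂) ↦ a₁ x₁ + a₂ x₂` attached to a point `(a₁, a₂)` of `ℂ²`. -/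
noncomputable def scalarRow (H : Type*) [NormedAddCommGroup H] [InnerProductSpace ℂ H]
    (a₁ a₂ : ℂ) : WithLp 2 (H × H) →L[ℂ] H :=
  rowOperator (a₁ • 1) (a₂ • 1)

lemma eq_scalarRow {X : WithLp 2 (H × H) →L[ℂ] H} {a₁ a₂ : ℂ}
    (h : ∀ x y, X ((WithLp.equiv 2 (H × H)).symm (x, y)) = a₁ • x + a₂ • y) :
    X = scalarRow H a₁ a₂ :=
  eq_rowOperator h

lemma scalarRow_sub_smul (a₁ a₂ b₁ b₂ c : ℂ) :
    scalarRow H a₁ a₂ - c • scalarRow H b₁ b₂ = scalarRow H (a₁ - c * b₁) (a₂ - c * b₂) := by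
  ext x
  simp only [scalarRow, rowOperator_apply, sub_apply, smul_apply]
  module

variable [CompleteSpace H] [CompleteSpace E₁] [CompleteSpace E₂]

lemma adjoint_rowOperator_apply (X₁ : E₁ →L[ℂ] H) (X₂ : E₂ →L[ℂ] H) (y : H) :
    adjoint (rowOperator X₁ X₂) y = WithLp.toLp 2 (adjoint X₁ y, adjoint X₂ y) := by
  refine ext_inner_right ℂ fun x => ?_
  simp [adjoint_inner_left, rowOperator_apply, inner_add_right]

lemma rowOperator_comp_adjoint (X₁ Y₁ : E₁ →L[ℂ] H) (X₂ Y₂ : E₂ →L[ℂ] H) :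
    rowOperator X₁ X₂ ∘L adjoint (rowOperator Y₁ Y₂) = X₁ ∘L adjoint Y₁ + X₂ ∘L adjoint Y₂ := by
  ext y
  simp [adjoint_rowOperator_apply, rowOperator_apply]

lemma scalarRow_comp_adjoint_rowOperator (a₁ a₂ : ℂ) (X₁ X₂ : H →L[ℂ] H) :
    scalarRow H a₁ a₂ ∘L adjoint (rowOperator X₁ X₂) = a₁ • adjoint X₁ + a₂ • adjoint X₂ :=
  rowOperator_comp_adjoint _ _ _ _

lemma scalarRow_comp_adjoint_scalarRow (a₁ a₂ b₁ b₂ : ℂ) :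
    scalarRow H a₁ a₂ ∘L adjoint (scalarRow H b₁ b₂) =
      (a₁ * starRingEnd ℂ b₁ + a₂ * starRingEnd ℂ b₂) • (1 : H →L[ℂ] H) := by
  rw [scalarRow.eq_def H b₁, scalarRow_comp_adjoint_rowOperator]
  simp only [map_smulₛₗ, adjoint_one, smul_smul, add_smul]

lemma scalarRow_comp_adjoint_self (a₁ a₂ : ℂ) :
    scalarRow H a₁ a₂ ∘L adjoint (scalarRow H a₁ a₂) =
      (‖a₁‖ ^ 2 + ‖a₂‖ ^ 2) • (1 : H →L[ℂ] H) := by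
  rw [scalarRow_comp_adjoint_scalarRow, Complex.mul_conj', Complex.mul_conj', ← Complex.coe_smul]
  push_cast
  rfl

lemma moebiusTransform_scalarRow {μ₁ μ₂ : ℂ} {D : WithLp 2 (H × H) →L[ℂ] WithLp 2 (H × H)}
    (hD : IsDefectOperator D (scalarRow H μ₁ μ₂)) {s : ℝ} (hs : 0 ≤ s)
    (hsμ : s ^ 2 = 1 - (‖μ₁‖ ^ 2 + ‖μ₂‖ ^ 2)) (hμ : ‖μ₁‖ ^ 2 + ‖μ₂‖ ^ 2 ≠ 0) (z₁ z₂ : ℂ) {ip : ℂ}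
    (hip : ip = z₁ * starRingEnd ℂ μ₁ + z₂ * starRingEnd ℂ μ₂) :
    moebiusTransform (scalarRow H μ₁ μ₂) (scalarRow H z₁ z₂) ((1 - ip)⁻¹ • 1) D s =
      scalarRow H
        (μ₁ - ((s : ℂ) / (1 - ip)) *
          (z₁ - (1 - (s : ℂ)) * (ip / ((‖μ₁‖ ^ 2 + ‖μ₂‖ ^ 2 : ℝ) : ℂ)) * μ₁))
        (μ₂ - ((s : ℂ) / (1 - ip)) *
          (z₂ - (1 - (s : ℂ)) * (ip / ((‖μ₁‖ ^ 2 + ‖μ₂‖ ^ 2 : ℝ) : ℂ)) * μ₂)) := by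
  rw [moebiusTransform, smul_comp, one_def, id_comp, smul_smul, ← div_eq_mul_inv,
    hD.comp_eq_sub_smul hμ hs hsμ (scalarRow_comp_adjoint_self μ₁ μ₂)
      (hip ▸ scalarRow_comp_adjoint_scalarRow z₁ z₂ μ₁ μ₂), scalarRow_sub_smul, scalarRow_sub_smul]

end RowOperators

theorem sigma_three_phi_sufficient_general
    {H : Type*} [NormedAddCommGroup H] [InnerProductSpace ℂ H] [CompleteSpace H]
    {A₁ A₂ Dstar : H →L[ℂ] H} (hDstar_pos : 0 ≤ Dstar)
    (hDstar_sq : Dstar * Dstar = 1 - A₁ * adjoint A₁ - A₂ * adjoint A₂)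
    {Arow : WithLp 2 (H × H) →L[ℂ] H}
    (hArow : ∀ x y : H, Arow ((WithLp.equiv 2 (H × H)).symm (x, y)) = A₁ x + A₂ y)
    {DA : WithLp 2 (H × H) →L[ℂ] WithLp 2 (H × H)} (hDA_pos : 0 ≤ DA)
    (hDA_sq : DA * DA = 1 - adjoint Arow ∘L Arow)
    {μ₁ μ₂ : ℂ} (hμ : ‖μ₁‖ ^ 2 + ‖μ₂‖ ^ 2 ≤ 1) (hμ0 : (μ₁, μ₂) ≠ ((0 : ℂ), (0 : ℂ)))
    {s : ℝ} (hs : s = Real.sqrt (1 - ‖μ₁‖ ^ 2 - ‖μ₂‖ ^ 2))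
    {Lrow : WithLp 2 (H × H) →L[ℂ] H}
    (hLrow : ∀ x y : H, Lrow ((WithLp.equiv 2 (H × H)).symm (x, y)) = μ₁ • x + μ₂ • y)
    {DL : WithLp 2 (H × H) →L[ℂ] WithLp 2 (H × H)} (hDL_pos : 0 ≤ DL)
    (hDL_sq : DL * DL = 1 - adjoint Lrow ∘L Lrow)
    {T₁ : H →L[ℂ] H} (hT₁ : (1 - Arow ∘L adjoint Lrow) * T₁ = 1)
    {B₁ B₂ : H →L[ℂ] H}
    (hB : ∀ x y : H, (Lrow - (s : ℂ) • (T₁ ∘L Arow ∘L DL))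
      ((WithLp.equiv 2 (H × H)).symm (x, y)) = B₁ x + B₂ y)
    {z₁ z₂ : ℂ} {R : H →L[ℂ] H} (hR : R * (1 - z₁ • adjoint A₁ - z₂ • adjoint A₂) = 1)
    {Zrow : WithLp 2 (H × H) →L[ℂ] H}
    (hZrow : ∀ x y : H, Zrow ((WithLp.equiv 2 (H × H)).symm (x, y)) = z₁ • x + z₂ • y)
    {ip : ℂ} (hip : ip = z₁ * starRingEnd ℂ μ₁ + z₂ * starRingEnd ℂ μ₂)
    {w₁ w₂ : ℂ}
    (hw₁ : w₁ = μ₁ - ((s : ℂ) / (1 - ip)) *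
      (z₁ - (1 - (s : ℂ)) * (ip / ((‖μ₁‖ ^ 2 + ‖μ₂‖ ^ 2 : ℝ) : ℂ)) * μ₁))
    (hw₂ : w₂ = μ₂ - ((s : ℂ) / (1 - ip)) *
      (z₂ - (1 - (s : ℂ)) * (ip / ((‖μ₁‖ ^ 2 + ‖μ₂‖ ^ 2 : ℝ) : ℂ)) * μ₂))
    {u : H} (hu : Dstar u ≠ 0)
    (hθ : adjoint (-Arow + Dstar ∘L R ∘L Zrow ∘L DA) u = 0) :
    ¬ Function.Surjective (fun p : H × H => (B₁ p.1 - w₁ • p.1) - (B₂ p.2 - w₂ • p.2)) := by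
  obtain rfl := eq_rowOperator hArow
  obtain rfl := eq_scalarRow hLrow
  obtain rfl := eq_scalarRow hZrow
  have hm : ‖μ₁‖ ^ 2 + ‖μ₂‖ ^ 2 ≠ 0 := by
    contrapose! hμ0
    simpa [add_eq_zero_iff_of_nonneg] using hμ0
  have hs_sq : s ^ 2 = 1 - (‖μ₁‖ ^ 2 + ‖μ₂‖ ^ 2) := by
    rw [hs, Real.sq_sqrt (by linarith), sub_sub]
  have hDstar : IsDefectOperator Dstar (adjoint (rowOperator A₁ A₂)) :=
    ⟨hDstar_pos, by rw [hDstar_sq, adjoint_adjoint, rowOperator_comp_adjoint, sub_sub]; rfl⟩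
  have hR_row : R * (1 - scalarRow H z₁ z₂ ∘L adjoint (rowOperator A₁ A₂)) = 1 := by
    rw [scalarRow_comp_adjoint_rowOperator, ← sub_sub, hR]
  have hB_row : moebiusTransform (scalarRow H μ₁ μ₂) (rowOperator A₁ A₂) T₁ DL s =
      rowOperator B₁ B₂ := eq_rowOperator hB
  intro hsurj
  refine not_surjective_moebiusTransform_sub ⟨hDA_pos, hDA_sq⟩ hDstar hR_row hT₁
    (hip ▸ scalarRow_comp_adjoint_scalarRow z₁ z₂ μ₁ μ₂) hu hθ DL s ?_
  rw [hB_row, moebiusTransform_scalarRow ⟨hDL_pos, hDL_sq⟩ (hs ▸ Real.sqrt_nonneg _) hs_sq hm z₁ z₂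
    hip, ← hw₁, ← hw₂, scalarRow, ← rowOperator_sub]
  exact surjective_rowOperator_of_surjective_sub hsurj

theorem sigma_three_phi_sufficient
    {H : Type*} [NormedAddCommGroup H] [InnerProductSpace ℂ H] [CompleteSpace H]
    (A₁ A₂ : H →L[ℂ] H)
    (hcomm : A₁ * A₂ = A₂ * A₁)
    (hcontr : A₁ * adjoint A₁ + A₂ * adjoint A₂ ≤ 1)
    (Dstar : H →L[ℂ] H) (hDstar_pos : 0 ≤ Dstar)
    (hDstar_sq : Dstar * Dstar = 1 - A₁ * adjoint A₁ - A₂ * adjoint A₂)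
    (hDstar_inj : Function.Injective ⇑Dstar)
    (Arow : WithLp 2 (H × H) →L[ℂ] H)
    (hArow : ∀ x y : H, Arow ((WithLp.equiv 2 (H × H)).symm (x, y)) = A₁ x + A₂ y)
    (DA : WithLp 2 (H × H) →L[ℂ] WithLp 2 (H × H)) (hDA_pos : 0 ≤ DA)
    (hDA_sq : DA * DA = 1 - (adjoint Arow) ∘L Arow)
    (μ₁ μ₂ : ℂ) (hμ : ‖μ₁‖ ^ 2 + ‖μ₂‖ ^ 2 < 1) (hμ0 : (μ₁, μ₂) ≠ ((0 : ℂ), (0 : ℂ)))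
    (s : ℝ) (hs : s = Real.sqrt (1 - ‖μ₁‖ ^ 2 - ‖μ₂‖ ^ 2))
    (Lrow : WithLp 2 (H × H) →L[ℂ] H)
    (hLrow : ∀ x y : H, Lrow ((WithLp.equiv 2 (H × H)).symm (x, y)) = μ₁ • x + μ₂ • y)
    (DL : WithLp 2 (H × H) →L[ℂ] WithLp 2 (H × H)) (hDL_pos : 0 ≤ DL)
    (hDL_sq : DL * DL = 1 - (adjoint Lrow) ∘L Lrow)
    (T₁ : H →L[ℂ] H) (hT₁ : T₁ * (1 - Arow ∘L adjoint Lrow) = 1)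
    (hT₁' : (1 - Arow ∘L adjoint Lrow) * T₁ = 1)
    (B₁ B₂ : H →L[ℂ] H)
    (hB : ∀ x y : H, (Lrow - (s : ℂ) • (T₁ ∘L Arow ∘L DL)) ((WithLp.equiv 2 (H × H)).symm (x, y)) = B₁ x + B₂ y)
    (z₁ z₂ : ℂ) (hz : ‖z₁‖ ^ 2 + ‖z₂‖ ^ 2 < 1)
    (R : H →L[ℂ] H) (hR₁ : R * (1 - z₁ • adjoint A₁ - z₂ • adjoint A₂) = 1)
    (hR₂ : (1 - z₁ • adjoint A₁ - z₂ • adjoint A₂) * R = 1)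
    (Zrow : WithLp 2 (H × H) →L[ℂ] H)
    (hZrow : ∀ x y : H, Zrow ((WithLp.equiv 2 (H × H)).symm (x, y)) = z₁ • x + z₂ • y)
    (ip : ℂ) (hip : ip = z₁ * (starRingEnd ℂ) μ₁ + z₂ * (starRingEnd ℂ) μ₂)
    (w₁ w₂ : ℂ)
    (hw₁ : w₁ = μ₁ - ((s : ℂ) / (1 - ip)) * (z₁ - (1 - (s : ℂ)) * (ip / ((‖μ₁‖ ^ 2 + ‖μ₂‖ ^ 2 : ℝ) : ℂ)) * μ₁))
    (hw₂ : w₂ = μ₂ - ((s : ℂ) / (1 - ip)) * (z₂ - (1 - (s : ℂ)) * (ip / ((‖μ₁‖ ^ 2 + ‖μ₂‖ ^ 2 : ℝ) : ℂ)) * μ₂))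
    (y : H) (hy : y ≠ 0)
    (hθ : adjoint (-Arow + Dstar ∘L R ∘L Zrow ∘L DA) (Dstar y) = 0) :
    ¬ Function.Surjective (fun p : H × H => (B₁ p.1 - w₁ • p.1) - (B₂ p.2 - w₂ • p.2)) := by
  have hDy : Dstar (Dstar y) ≠ 0 := by simpa [map_eq_zero_iff _ hDstar_inj] using hy
  exact sigma_three_phi_sufficient_general hDstar_pos hDstar_sq hArow hDA_pos hDA_sq hμ.le hμ0 hs
    hLrow hDL_pos hDL_sq hT₁' hB hR₁ hZrow hip hw₁ hw₂ hDy hθ
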